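/- Let (a_n)_{n≥1} be the sequence of Rudin–Shapiro integers. Then for Lebesgue-almost all real α, for every ε > 0 there are infinitely many N with N·D_N*({a_1 α}, …, {a_N α}) ≥ N^{1/2 − ε}. -/

import Mathlib

open Filter MeasureTheory

/-- Number of occurrences of the block `11` in a list of binary digits. -/
def pairs11 : List ℕ → ℕ
  | a :: b :: rest => (if a = 1 ∧ b = 1 then 1 else 0) + pairs11 (b :: rest)
  | _ => 0

/-- The Rudin–Shapiro sequence: `rs k = 1` if the number of `11`-blocks in the binary
representation of `k` is even, and `rs k = -1` otherwise. -/
def rs (k : ℕ) : ℤ := if pairs11 (Nat.digits 2 k) % 2 = 0 then 1 else -1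

/-- The `n`-th Rudin–Shapiro integer (indexed from `n = 1`): the increasing enumeration
of `{k : rs k = 1}`, so `rsInt 1 = 0`, `rsInt 2 = 1`, `rsInt 3 = 2`, `rsInt 4 = 4`, ... -/
noncomputable def rsInt (n : ℕ) : ℕ := Nat.nth (fun k => rs k = 1) (n - 1)

/-- Star-discrepancy of the first `N` points `x 1, ..., x N` of a sequence in `[0,1)`. -/
noncomputable def starDisc (N : ℕ) (x : ℕ → ℝ) : ℝ :=
  ⨆ β : Set.Ioc (0:ℝ) 1,
    |(((Finset.Icc 1 N).filter fun n => 0 ≤ x n ∧ x n < (β : ℝ)).card : ℝ) / N - (β : ℝ)|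

lemma rs_two_mul (k : ℕ) : rs (2 * k) = rs k := by
  rcases Nat.eq_zero_or_pos k with rfl | hk
  · simp
  have h : Nat.digits 2 (2 * k) = 0 :: Nat.digits 2 k := by
    simpa using Nat.digits_add 2 (by norm_num) 0 k (by norm_num) (Or.inr hk.ne')
  have h' : ∀ l : List ℕ, pairs11 (0 :: l) = pairs11 l := by
    intro l
    cases l <;> simp [pairs11]
  rw [rs, rs, h, h']

lemma rs_two_mul_add_one (k : ℕ) : rs (2 * k + 1) = (-1) ^ k * rs k := by
  have h : Nat.digits 2 (2 * k + 1) = 1 :: Nat.digits 2 k := by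
    have := Nat.digits_add 2 (by norm_num) 1 k (by norm_num) (Or.inl one_ne_zero)
    rwa [add_comm] at this
  rcases Nat.eq_zero_or_pos k with rfl | hk
  · simp [rs, pairs11]
  have hd : Nat.digits 2 k = k % 2 :: Nat.digits 2 (k / 2) :=
    Nat.digits_def' (by norm_num) hk
  rw [rs, rs, h, hd]
  rcases Nat.even_or_odd k with he | ho
  · have h0 : k % 2 = 0 := Nat.even_iff.mp he
    simp [pairs11, h0, he.neg_one_pow]
  · have h1 : k % 2 = 1 := Nat.odd_iff.mp ho
    rw [ho.neg_one_pow, h1, pairs11]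
    split_ifs <;> simp at * <;> omega

/-- The Rudin–Shapiro polynomial `∑_{k < n} r_k z ^ k`. -/
noncomputable def rsPoly (n : ℕ) (z : ℂ) : ℂ := ∑ k ∈ Finset.range n, (rs k : ℂ) * z ^ k

lemma rsPoly_two_mul (n : ℕ) (z : ℂ) :
    rsPoly (2 * n) z = rsPoly n (z ^ 2) + z * rsPoly n (-z ^ 2) := by
  induction n with
  | zero => simp [rsPoly]
  | succ n ih =>
    have h (w : ℂ) (k : ℕ) : rsPoly (k + 1) w = rsPoly k w + rs k * w ^ k :=
      Finset.sum_range_succ _ _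
    rw [show 2 * (n + 1) = 2 * n + 1 + 1 by ring, h, h, ih, h, h, rs_two_mul, rs_two_mul_add_one,
      neg_pow (z ^ 2) n]
    push_cast
    ring

/-- The dyadic block `∑_{2 ^ m ≤ k < 2 ^ (m + 1)} r_k z ^ k` is orthogonally complementary to
the initial segment `∑_{k < 2 ^ m} r_k z ^ k` on the unit circle. -/
lemma rsPoly_block_orthogonality (m : ℕ) : ∀ z : ℂ, ‖z‖ = 1 →
    rsPoly (2 ^ m) z * star (rsPoly (2 ^ m) z)
      + (rsPoly (2 ^ (m + 1)) z - rsPoly (2 ^ m) z)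
        * star (rsPoly (2 ^ (m + 1)) z - rsPoly (2 ^ m) z) = 2 ^ (m + 1) ∧
    rsPoly (2 ^ m) z * star (rsPoly (2 ^ m) (-z))
      + (rsPoly (2 ^ (m + 1)) z - rsPoly (2 ^ m) z)
        * star (rsPoly (2 ^ (m + 1)) (-z) - rsPoly (2 ^ m) (-z)) = 0 := by
  induction m with
  | zero =>
    intro z hz
    have hzz : z * star z = 1 := by
      simpa [hz] using Complex.mul_conj' z
    have h0 : rs 0 = 1 := by simp [rs, pairs11]
    have h1 : rs 1 = 1 := by simp [rs, pairs11]
    rw [Complex.star_def] at hzz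
    constructor <;> simp [rsPoly, Finset.sum_range_succ, h0, h1]
    · linear_combination hzz
    · linear_combination -hzz
  | succ m ih =>
    intro z hz
    have hzz : z * star z = 1 := by
      simpa [hz] using Complex.mul_conj' z
    obtain ⟨n₁, c₁⟩ := ih (z ^ 2) (by simp [hz])
    obtain ⟨n₂, c₂⟩ := ih (-z ^ 2) (by simp [hz])
    rw [neg_neg] at c₂
    have hr (k : ℕ) (w : ℂ) :
        rsPoly (2 ^ (k + 1)) w = rsPoly (2 ^ k) (w ^ 2) + w * rsPoly (2 ^ k) (-w ^ 2) := by
      rw [pow_succ', rsPoly_two_mul]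
    rw [hr (m + 1) z, hr (m + 1) (-z), hr m z, hr m (-z), neg_sq]
    simp only [star_add, star_sub, star_mul', star_neg] at n₁ n₂ c₁ c₂ ⊢
    constructor
    · linear_combination n₁ + z * star z * n₂ + star z * c₁ + z * c₂ + 2 ^ (m + 1) * hzz
    · linear_combination n₁ - z * star z * n₂ - star z * c₁ + z * c₂ - 2 ^ (m + 1) * hzz

lemma normSq_rsPoly_add_normSq_block (m : ℕ) {z : ℂ} (hz : ‖z‖ = 1) :
    ‖rsPoly (2 ^ m) z‖ ^ 2 + ‖rsPoly (2 ^ (m + 1)) z - rsPoly (2 ^ m) z‖ ^ 2 = 2 ^ (m + 1) := by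
  have h := (rsPoly_block_orthogonality m z hz).1
  simp only [Complex.star_def, Complex.mul_conj'] at h
  exact_mod_cast h

/-- Among two consecutive dyadic Rudin–Shapiro polynomials, one has almost maximal modulus. -/
lemma frequently_le_norm_rsPoly {z : ℂ} (hz : ‖z‖ = 1) :
    ∃ᶠ m : ℕ in atTop, (2 / 5 : ℝ) * √(2 ^ m) ≤ ‖rsPoly (2 ^ m) z‖ := by
  rw [frequently_atTop]
  intro m
  by_contra! hlt
  have h₀ := hlt m le_rfl
  have h₁ := hlt (m + 1) m.le_succ
  have hsum := normSq_rsPoly_add_normSq_block m hz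
  have htri := norm_sub_le (rsPoly (2 ^ (m + 1)) z) (rsPoly (2 ^ m) z)
  have hs₀ : √((2 : ℝ) ^ m) ^ 2 = 2 ^ m := Real.sq_sqrt (by positivity)
  have hs₁ : √((2 : ℝ) ^ (m + 1)) ^ 2 = 2 * 2 ^ m := by
    rw [Real.sq_sqrt (by positivity), pow_succ']
  rw [pow_succ' (2 : ℝ) m] at hsum
  have hpos : (0 : ℝ) < 2 ^ m := by positivity
  have hP : ‖rsPoly (2 ^ m) z‖ ^ 2 ≤ (2 / 5 * √(2 ^ m)) ^ 2 := by gcongr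
  have hP' : ‖rsPoly (2 ^ (m + 1)) z‖ ^ 2 ≤ (2 / 5 * √(2 ^ (m + 1))) ^ 2 := by gcongr
  have hR : ‖rsPoly (2 ^ (m + 1)) z - rsPoly (2 ^ m) z‖ ^ 2
      ≤ (‖rsPoly (2 ^ (m + 1)) z‖ + ‖rsPoly (2 ^ m) z‖) ^ 2 := by gcongr
  nlinarith [sq_nonneg (‖rsPoly (2 ^ (m + 1)) z‖ - ‖rsPoly (2 ^ m) z‖)]

lemma sum_rsInt_eq (f : ℕ → ℂ) (M : ℕ) :
    ∑ n ∈ Finset.Icc 1 (Nat.count (fun k => rs k = 1) M), f (rsInt n)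
      = ∑ k ∈ Finset.range M, (1 + (rs k : ℂ)) / 2 * f k := by
  induction M with
  | zero => simp
  | succ M ih =>
    rw [Finset.sum_range_succ, ← ih, Nat.count_succ]
    by_cases h : rs M = 1
    · rw [if_pos h, Finset.sum_Icc_succ_top (by omega), rsInt, Nat.add_sub_cancel,
        Nat.nth_count (p := fun k => rs k = 1) h, h]
      norm_num
    · have h' : rs M = -1 := by
        unfold rs at h ⊢
        split_ifs at h ⊢ <;> simp_all
      simp [h']

lemma abs_count_div_sub_le_starDisc (N : ℕ) (x : ℕ → ℝ) {β : ℝ} (hβ : β ∈ Set.Ioc (0 : ℝ) 1) :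
    |(((Finset.Icc 1 N).filter fun n => 0 ≤ x n ∧ x n < β).card : ℝ) / N - β| ≤ starDisc N x := by
  refine le_ciSup (f := fun β : Set.Ioc (0 : ℝ) 1 =>
    |(((Finset.Icc 1 N).filter fun n => 0 ≤ x n ∧ x n < (β : ℝ)).card : ℝ) / N - (β : ℝ)|)
    ⟨1, ?_⟩ ⟨β, hβ⟩
  rintro _ ⟨⟨γ, hγ⟩, rfl⟩
  have hc : (((Finset.Icc 1 N).filter fun n => 0 ≤ x n ∧ x n < γ).card : ℝ) / N ≤ 1 := by
    refine div_le_one_of_le₀ ?_ (by positivity)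
    exact_mod_cast (Finset.card_filter_le _ _).trans (by simp)
  have hc' : 0 ≤ (((Finset.Icc 1 N).filter fun n => 0 ≤ x n ∧ x n < γ).card : ℝ) / N := by
    positivity
  exact abs_le.mpr ⟨by linarith [hγ.2], by linarith [hγ.1]⟩

/-- Koksma's inequality for the function `t ↦ exp (2πit)`. -/
lemma norm_sum_exp_le_starDisc (N : ℕ) (x : ℕ → ℝ) (hx : ∀ n, x n ∈ Set.Ico (0 : ℝ) 1) :
    ‖∑ n ∈ Finset.Icc 1 N, Complex.exp (2 * Real.pi * Complex.I * x n)‖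
      ≤ 2 * Real.pi * (N * starDisc N x) := by
  set c : ℂ := 2 * Real.pi * Complex.I with hc
  have hc0 : c ≠ 0 := Complex.two_pi_I_ne_zero
  have hnorm (t : ℝ) : ‖Complex.exp (c * t)‖ = 1 := by
    rw [show c * t = ((2 * Real.pi * t : ℝ) : ℂ) * Complex.I by rw [hc]; push_cast; ring]
    exact Complex.norm_exp_ofReal_mul_I _
  have hc1 : Complex.exp c = 1 := Complex.exp_two_pi_mul_I
  set g : ℝ → ℂ := fun t => c * Complex.exp (c * t) with hg
  have hgc : Continuous g := by fun_prop
  have hderiv (t : ℝ) : HasDerivAt (fun s : ℝ => Complex.exp (c * s)) (g t) t := by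
    have h := ((Complex.ofRealCLM.hasDerivAt (x := t)).const_mul c).cexp
    simpa [hg, mul_comm] using h
  have hpoint (n : ℕ) : ∫ t in (0 : ℝ)..1, (Set.Ioi (x n)).indicator g t
      = 1 - Complex.exp (c * x n) := by
    rw [intervalIntegral.integral_of_le zero_le_one, setIntegral_indicator measurableSet_Ioi,
      Set.Ioc_inter_Ioi, max_eq_right (hx n).1,
      ← intervalIntegral.integral_of_le (hx n).2.le,
      intervalIntegral.integral_eq_sub_of_hasDerivAt (fun t _ => hderiv t)
        (hgc.intervalIntegrable _ _)]
    simp [hc1]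
  have hlin : ∫ t in (0 : ℝ)..1, (t : ℂ) * g t = 1 := by
    have h (t : ℝ) : HasDerivAt (fun s : ℝ => (s : ℂ) * Complex.exp (c * s) - Complex.exp (c * s) / c)
        ((t : ℂ) * g t) t := by
      have h1 := ((Complex.ofRealCLM.hasDerivAt (x := t)).mul (hderiv t)).sub
        ((hderiv t).div_const c)
      refine h1.congr_deriv ?_
      simp only [hg, Complex.ofRealCLM_apply, Complex.ofReal_one]
      field_simp
      ring
    rw [intervalIntegral.integral_eq_sub_of_hasDerivAt (fun t _ => h t)
      (Continuous.intervalIntegrable (by fun_prop) _ _)]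
    simp [hc1]
  have hint (n : ℕ) : IntervalIntegrable ((Set.Ioi (x n)).indicator g) volume 0 1 := by
    rw [intervalIntegrable_iff]
    exact (intervalIntegrable_iff.mp (hgc.intervalIntegrable 0 1)).indicator measurableSet_Ioi
  have hrepr : ∑ n ∈ Finset.Icc 1 N, Complex.exp (c * x n)
      = -∫ t in (0 : ℝ)..1, (∑ n ∈ Finset.Icc 1 N, (Set.Ioi (x n)).indicator g t
          - N * ((t : ℂ) * g t)) := by
    rw [intervalIntegral.integral_sub
      (by simpa only [Finset.sum_fn] using
        IntervalIntegrable.sum (Finset.Icc 1 N) (fun n _ => hint n))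
      (Continuous.intervalIntegrable (by fun_prop) _ _),
      intervalIntegral.integral_finsetSum (fun n _ => hint n),
      intervalIntegral.integral_const_mul, hlin]
    simp [hpoint]
  rw [hrepr, norm_neg]
  refine (intervalIntegral.norm_integral_le_of_norm_le_const
    (C := 2 * Real.pi * (N * starDisc N x)) fun t ht => ?_).trans (by simp)
  rw [Set.uIoc_of_le zero_le_one] at ht
  rcases Nat.eq_zero_or_pos N with rfl | hN
  · simp
  have hN' : (0 : ℝ) < N := by exact_mod_cast hN
  have hsum : ∑ n ∈ Finset.Icc 1 N, (Set.Ioi (x n)).indicator g t - N * ((t : ℂ) * g t)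
      = ((N * ((((Finset.Icc 1 N).filter fun n => 0 ≤ x n ∧ x n < t).card : ℝ) / N - t) : ℝ) : ℂ)
        * g t := by
    have hcount : ∑ n ∈ Finset.Icc 1 N, (Set.Ioi (x n)).indicator g t
        = (((Finset.Icc 1 N).filter fun n => 0 ≤ x n ∧ x n < t).card : ℂ) * g t := by
      simp [Set.indicator_apply, (hx _).1, ← Finset.sum_filter]
    rw [hcount, mul_sub, mul_div_cancel₀ _ hN'.ne']
    push_cast
    ring
  have hgnorm : ‖g t‖ = 2 * Real.pi := by
    rw [hg, norm_mul, hnorm, hc]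
    simp [Real.pi_pos.le]
  rw [hsum, norm_mul, hgnorm, Complex.norm_real, Real.norm_eq_abs, abs_mul, abs_of_pos hN',
    mul_comm]
  gcongr
  exact abs_count_div_sub_le_starDisc N x ht

lemma norm_sum_rsInt_ge {z : ℂ} (hz : ‖z‖ = 1) (hz1 : z ≠ 1) (M : ℕ) :
    ‖rsPoly M z‖ / 2 - 1 / ‖z - 1‖
      ≤ ‖∑ n ∈ Finset.Icc 1 (Nat.count (fun k => rs k = 1) M), z ^ rsInt n‖ := by
  have hpos : 0 < ‖z - 1‖ := norm_pos_iff.mpr (sub_ne_zero.mpr hz1)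
  have hsum : ∑ n ∈ Finset.Icc 1 (Nat.count (fun k => rs k = 1) M), z ^ rsInt n
      = rsPoly M z / 2 + (z ^ M - 1) / (z - 1) / 2 := by
    rw [sum_rsInt_eq (fun k => z ^ k), ← geom_sum_eq hz1, rsPoly, ← add_div,
      ← Finset.sum_add_distrib, Finset.sum_div]
    exact Finset.sum_congr rfl fun k _ => by ring
  have hgeom : ‖(z ^ M - 1) / (z - 1) / 2‖ ≤ 1 / ‖z - 1‖ := by
    have h2 : ‖z ^ M - 1‖ ≤ 2 := (norm_sub_le _ _).trans (by simp [hz]; norm_num)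
    rw [norm_div, norm_div, Complex.norm_ofNat, div_div, mul_comm, ← div_div]
    gcongr
    linarith
  have htri := norm_sub_le (rsPoly M z / 2 + (z ^ M - 1) / (z - 1) / 2) ((z ^ M - 1) / (z - 1) / 2)
  rw [add_sub_cancel_right, norm_div, Complex.norm_ofNat] at htri
  rw [hsum]
  linarith

/-- A positive multiple of `√x`, minus a constant, eventually dominates `x ^ (1 / 2 - δ)`. -/
lemma eventually_rpow_le_sqrt {δ : ℝ} (hδ : 0 < δ) (C K : ℝ) {c : ℝ} (hc : 0 < c) :
    ∀ᶠ x : ℝ in atTop, C * x ^ ((1 : ℝ) / 2 - δ) + K ≤ c * √x := by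
  have h₁ : Tendsto (fun x : ℝ => C * x ^ (-δ) + K * x ^ (-(1 / 2 : ℝ))) atTop (nhds 0) := by
    simpa using ((tendsto_rpow_neg_atTop hδ).const_mul C).add
      ((tendsto_rpow_neg_atTop (by norm_num : (0 : ℝ) < 1 / 2)).const_mul K)
  filter_upwards [h₁.eventually_lt_const hc, eventually_gt_atTop 0] with x hx hx0
  have h := mul_le_mul_of_nonneg_right hx.le (Real.rpow_nonneg hx0.le (1 / 2))
  rw [Real.sqrt_eq_rpow]
  rw [add_mul, mul_assoc, mul_assoc, ← Real.rpow_add hx0, ← Real.rpow_add hx0] at h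
  simpa [add_comm, sub_eq_add_neg] using h

/-- The discrepancy of the Rudin–Shapiro integers is large for every non-integer multiplier. -/
lemma frequently_rpow_le_starDisc {α : ℝ} (hα : α ∉ Set.range ((↑) : ℤ → ℝ)) {ε : ℝ}
    (hε : 0 < ε) : ∃ᶠ N : ℕ in atTop,
      (N : ℝ) ^ ((1 : ℝ) / 2 - ε) ≤
        (N : ℝ) * starDisc N (fun n => Int.fract ((rsInt n : ℝ) * α)) := by
  set z : ℂ := Complex.exp (2 * Real.pi * Complex.I * α) with hzdef
  have hz : ‖z‖ = 1 := by
    rw [hzdef, show (2 * Real.pi * Complex.I * α : ℂ) = ((2 * Real.pi * α : ℝ) : ℂ) * Complex.I by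
      push_cast; ring]
    exact Complex.norm_exp_ofReal_mul_I _
  have hz1 : z ≠ 1 := by
    intro h
    obtain ⟨n, hn⟩ := Complex.exp_eq_one_iff.mp h
    rw [mul_comm] at hn
    exact hα ⟨n, by exact_mod_cast (mul_right_cancel₀ Complex.two_pi_I_ne_zero hn).symm⟩
  have hexp (k : ℕ) :
      Complex.exp (2 * Real.pi * Complex.I * (Int.fract ((k : ℝ) * α) : ℝ)) = z ^ k := by
    rw [hzdef, ← Complex.exp_nat_mul, Complex.exp_eq_exp_iff_exists_int]
    refine ⟨-⌊(k : ℝ) * α⌋, ?_⟩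
    rw [Int.fract]
    push_cast
    ring
  set δ := min ε (1 / 2) with hδdef
  have hδ : 0 < δ := lt_min hε (by norm_num)
  rw [frequently_atTop]
  intro N₀
  have hpow : Tendsto (fun m : ℕ => (2 : ℝ) ^ m) atTop atTop :=
    tendsto_pow_atTop_atTop_of_one_lt (by norm_num)
  have hlarge₁ := hpow.eventually
    (eventually_rpow_le_sqrt hδ (2 * Real.pi) (1 / ‖z - 1‖) (c := 1 / 5) (by norm_num))
  have hlarge₂ := hpow.eventually (eventually_rpow_le_sqrt one_half_pos 0
    (1 / ‖z - 1‖ + N₀ + 1) (c := 1 / 5) (by norm_num))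
  obtain ⟨m, hm, h₁, h₂⟩ :=
    ((frequently_le_norm_rsPoly hz).and_eventually (hlarge₁.and hlarge₂)).exists
  set N := Nat.count (fun k => rs k = 1) (2 ^ m) with hN
  have hsum := norm_sum_rsInt_ge hz hz1 (2 ^ m)
  rw [← hN] at hsum
  have hcard : ‖∑ n ∈ Finset.Icc 1 N, z ^ rsInt n‖ ≤ N := by
    refine (norm_sum_le _ _).trans ?_
    simp [hz]
  have hNge : (N₀ : ℝ) + 1 ≤ N := by linarith
  have hNge' : N₀ + 1 ≤ N := by exact_mod_cast hNge
  have hN1 : (1 : ℝ) ≤ N := by exact_mod_cast (by omega : 1 ≤ N)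
  refine ⟨N, by omega, ?_⟩
  have hkoksma := norm_sum_exp_le_starDisc N (fun n => Int.fract ((rsInt n : ℝ) * α))
    fun n => ⟨Int.fract_nonneg _, Int.fract_lt_one _⟩
  simp only [hexp] at hkoksma
  have hNle : (N : ℝ) ≤ 2 ^ m := by exact_mod_cast Nat.count_le (p := fun k => rs k = 1)
  have hrpow : (N : ℝ) ^ ((1 : ℝ) / 2 - ε) ≤ ((2 : ℝ) ^ m) ^ ((1 : ℝ) / 2 - δ) :=
    calc (N : ℝ) ^ ((1 : ℝ) / 2 - ε) ≤ (N : ℝ) ^ ((1 : ℝ) / 2 - δ) :=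
          Real.rpow_le_rpow_of_exponent_le hN1 (by linarith [min_le_left ε (1 / 2)])
      _ ≤ _ := Real.rpow_le_rpow (by positivity) hNle (by linarith [min_le_right ε (1 / 2)])
  refine hrpow.trans (le_of_mul_le_mul_left ?_ Real.two_pi_pos)
  linarith

theorem stmt8 :
    ∀ᵐ α ∂(volume : Measure ℝ), ∀ ε > 0, ∃ᶠ N : ℕ in atTop,
      (N : ℝ) * starDisc N (fun n => Int.fract ((rsInt n : ℝ) * α)) ≥
        (N : ℝ) ^ ((1 : ℝ) / 2 - ε) := by
  filter_upwards [(Set.countable_range ((↑) : ℤ → ℝ)).ae_notMem volume] with α hα ε hε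
  exact frequently_rpow_le_starDisc hα hε
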